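/- Let σ be a linear automorphism of V and let (δ_{i,r}, δ_{i,l})_{i≥1} satisfy the sequence-pair recurrence for σ. Then for every integer d ≥ 1, ∑_{i=1}^{d} (−1)^i (δ_{i,r} ⊗ id_V^{⊗(d−i)}) = (−1)^{d+1} ∑_{i=1}^{d} (−1)^i (σ^{⊗(d−i)} ⊗ δ_{i,l}) as linear maps V^{⊗d} → V^{⊗(d+1)}. -/

import Mathlib

open scoped TensorProduct
open PiTensorProduct

namespace OrePaper

variable (k : Type*) [Field k] (V : Type*) [AddCommGroup V] [Module k V]

/-- The canonical isomorphism `V^{⊗a} ⊗ V^{⊗b} ≃ V^{⊗(a+b)}`. -/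
noncomputable abbrev mulPow (a b : ℕ) :
    ((⨂[k]^a V) ⊗[k] (⨂[k]^b V)) ≃ₗ[k] ⨂[k]^(a+b) V :=
  TensorPower.mulEquiv

variable {k V}

/-- `f ⊗ g` for linear maps between tensor powers, under the canonical identifications. -/
noncomputable def tmap {a b c d : ℕ} (f : (⨂[k]^a V) →ₗ[k] ⨂[k]^c V)
    (g : (⨂[k]^b V) →ₗ[k] ⨂[k]^d V) :
    (⨂[k]^(a+b) V) →ₗ[k] ⨂[k]^(c+d) V :=
  (mulPow k V c d).toLinearMap ∘ₗ TensorProduct.map f g ∘ₗ (mulPow k V a b).symm.toLinearMap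

/-- Transport a linear map between tensor powers along equalities of exponents
(the canonical associativity identifications). -/
noncomputable def conv {a b a' b' : ℕ} (h1 : a = a') (h2 : b = b')
    (f : (⨂[k]^a V) →ₗ[k] ⨂[k]^b V) : (⨂[k]^a' V) →ₗ[k] ⨂[k]^b' V :=
  (TensorPower.cast k V h2).toLinearMap ∘ₗ f ∘ₗ (TensorPower.cast k V h1.symm).toLinearMap

/-- `f^{⊗n}` for a linear endomorphism `f` of `V`. -/
noncomputable def pmap (f : V →ₗ[k] V) (n : ℕ) : (⨂[k]^n V) →ₗ[k] ⨂[k]^n V :=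
  PiTensorProduct.map (fun _ => f)

/-- A family `(δ_{i,r}, δ_{i,l})_{i ≥ 1}` of linear maps
`δ_{i,r} : V^{⊗i} → V^{⊗i} ⊗ V` and `δ_{i,l} : V^{⊗i} → V ⊗ V^{⊗i}` (written, under the
canonical identifications, as maps `V^{⊗i} → V^{⊗(i+1)}`) satisfies the *sequence-pair
recurrence* for a linear automorphism `σ` of `V` if `δ_{1,r} = δ_{1,l}` and, for all `i ≥ 2`,
`δ_{i,r} + (-1)^i δ_{i,l} = σ ⊗ δ_{i-1,r} + (-1)^i (δ_{i-1,l} ⊗ id_V)`. -/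
def SeqPairRec (σ : V ≃ₗ[k] V)
    (δr δl : (i : ℕ) → (⨂[k]^i V) →ₗ[k] ⨂[k]^(i+1) V) : Prop :=
  δr 1 = δl 1 ∧
  ∀ (i : ℕ) (hi : 2 ≤ i),
    δr i + ((-1 : k)^i) • δl i
      = conv (by omega) (by omega) (tmap (pmap σ.toLinearMap 1) (δr (i-1)))
        + ((-1 : k)^i) • conv (by omega) (by omega) (tmap (δl (i-1)) (pmap (LinearMap.id) 1))

/-!
The spaces `Hom (V^{⊗a}, V^{⊗b})` form a ring graded by `ℕ × ℕ`, with `f ⊗ g` as the product.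
In this ring the recurrence for `i + 1`, multiplied by `(-1)^{i+1}`, reads
`a_{i+1} + b_i t = b_{i+1} + u a_i`, where `a_i = (-1)^i δ_{i,r}`, `b_i = -δ_{i,l}`, `u = -σ` and
`t = id_V`. The claim becomes `∑ a_i t^{d-i} = ∑ u^{d-i} b_i`, which holds in every semiring: both
sides obey a Horner recursion in `d`, and two steps of it use only the hypothesis.
-/

section AlternatingSums

open Finset

variable {R : Type*}

theorem sum_range_succ_mul_pow [Semiring R] (a : ℕ → R) (t : R) (d : ℕ) :
    ∑ i ∈ range (d + 1), a i * t ^ (d + 1 - (i + 1))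
      = (∑ i ∈ range d, a i * t ^ (d - (i + 1))) * t + a d := by
  rw [sum_range_succ, Nat.sub_self, pow_zero, mul_one, sum_mul]
  congr 1
  refine sum_congr rfl fun i hi => ?_
  rw [mul_assoc, ← pow_succ, Nat.sub_add_comm (mem_range.mp hi)]

theorem sum_range_succ_pow_mul [Semiring R] (u : R) (b : ℕ → R) (d : ℕ) :
    ∑ i ∈ range (d + 1), u ^ (d + 1 - (i + 1)) * b i
      = u * (∑ i ∈ range d, u ^ (d - (i + 1)) * b i) + b d := by
  rw [sum_range_succ, Nat.sub_self, pow_zero, one_mul, mul_sum]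
  congr 1
  refine sum_congr rfl fun i hi => ?_
  rw [← mul_assoc, ← pow_succ', Nat.sub_add_comm (mem_range.mp hi)]

theorem sum_mul_pow_eq_sum_pow_mul [Semiring R] {u t : R} {a b : ℕ → R}
    (h_zero : a 0 = b 0) (h_succ : ∀ n, a (n + 1) + b n * t = b (n + 1) + u * a n) (d : ℕ) :
    ∑ i ∈ range d, a i * t ^ (d - (i + 1)) = ∑ i ∈ range d, u ^ (d - (i + 1)) * b i := by
  induction d using Nat.twoStepInduction with
  | zero => simp
  | one => simp [h_zero]
  | more d ih ih_succ =>
    set P := ∑ i ∈ range d, a i * t ^ (d - (i + 1))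
    set Q := ∑ i ∈ range d, u ^ (d - (i + 1)) * b i
    have hQ_succ := sum_range_succ_pow_mul u b d
    have hP_succ := sum_range_succ_mul_pow a t d
    calc ∑ i ∈ range (d + 2), a i * t ^ (d + 2 - (i + 1))
        = (u * Q + b d) * t + a (d + 1) := by
          rw [sum_range_succ_mul_pow a t (d + 1), ih_succ, hQ_succ]
      _ = u * (P * t) + (a (d + 1) + b d * t) := by
          rw [add_mul, mul_assoc, ih, add_assoc, add_comm (b d * t)]
      _ = u * (P * t + a d) + b (d + 1) := by
          rw [h_succ, mul_add, add_assoc, add_comm (b (d + 1))]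
      _ = ∑ i ∈ range (d + 2), u ^ (d + 2 - (i + 1)) * b i := by
          rw [sum_range_succ_pow_mul u b (d + 1), ← ih_succ, hP_succ]

theorem alternating_sum_mul_pow_eq_alternating_sum_pow_mul [Ring R] {s t : R}
    {r l : ℕ → R} (h_zero : r 0 = l 0)
    (h_succ : ∀ n, r (n + 1) + (-1) ^ n * l (n + 1) = s * r n + (-1) ^ n * (l n * t)) (d : ℕ) :
    ∑ i ∈ range d, (-1) ^ (i + 1) * (r i * t ^ (d - (i + 1)))
      = (-1) ^ (d + 1) * ∑ i ∈ range d, (-1) ^ (i + 1) * (s ^ (d - (i + 1)) * l i) := by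
  have h_succ' (n : ℕ) : (-1) ^ (n + 1 + 1) * r (n + 1) + -l n * t
      = -l (n + 1) + -s * ((-1) ^ (n + 1) * r n) := by
    have h := h_succ n
    rcases neg_one_pow_eq_or R n with hn | hn <;> simp only [hn, pow_succ] at h ⊢
    · linear_combination (norm := noncomm_ring) h
    · linear_combination (norm := noncomm_ring) -h
  have key := sum_mul_pow_eq_sum_pow_mul (u := -s) (t := t) (a := fun i => (-1) ^ (i + 1) * r i)
    (b := fun i => -l i) (by simp [h_zero]) h_succ' d
  simp only [mul_assoc] at key
  rw [key, mul_sum]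
  refine sum_congr rfl fun i hi => ?_
  obtain ⟨m, rfl⟩ := Nat.exists_eq_add_of_lt (mem_range.mp hi)
  have h_sign : (-1 : R) ^ (i + m + 1 + 1) * (-1) ^ (i + 1) = -(-1) ^ m := by
    rw [← pow_add, show i + m + 1 + 1 + (i + 1) = m + 1 + 2 * (i + 1) by ring, pow_add, pow_mul]
    simp [pow_succ]
  rw [← mul_assoc ((-1 : R) ^ (i + m + 1 + 1)), h_sign, neg_pow]
  rw [show i + m + 1 - (i + 1) = m by omega]
  noncomm_ring

end AlternatingSums

theorem conv_rfl {a b : ℕ} (f : (⨂[k]^a V) →ₗ[k] ⨂[k]^b V) : conv rfl rfl f = f := by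
  simp [conv]

theorem conv_apply_cast {a b a' b' : ℕ} (h1 : a = a') (h2 : b = b')
    (f : (⨂[k]^a V) →ₗ[k] ⨂[k]^b V) (x : ⨂[k]^a V) :
    conv h1 h2 f (TensorPower.cast k V h1 x) = TensorPower.cast k V h2 (f x) := by
  simp [conv]

theorem tmap_mulPow_tmul {a b c d : ℕ} (f : (⨂[k]^a V) →ₗ[k] ⨂[k]^c V)
    (g : (⨂[k]^b V) →ₗ[k] ⨂[k]^d V) (x : ⨂[k]^a V) (y : ⨂[k]^b V) :
    tmap f g (mulPow k V a b (x ⊗ₜ y)) = mulPow k V c d (f x ⊗ₜ g y) := by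
  simp [tmap]

theorem hom_ext_mulPow {a b : ℕ} {M : Type*} [AddCommMonoid M] [Module k M]
    {F G : (⨂[k]^(a + b) V) →ₗ[k] M}
    (h : ∀ x y, F (mulPow k V a b (x ⊗ₜ y)) = G (mulPow k V a b (x ⊗ₜ y))) : F = G :=
  (LinearMap.cancel_right (mulPow k V a b).surjective).mp (TensorProduct.ext' h)

theorem hom_ext_mulPow_mulPow {a b c : ℕ} {M : Type*} [AddCommMonoid M] [Module k M]
    {F G : (⨂[k]^(a + b + c) V) →ₗ[k] M}
    (h : ∀ x y z, F (mulPow k V _ c (mulPow k V a b (x ⊗ₜ y) ⊗ₜ z))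
      = G (mulPow k V _ c (mulPow k V a b (x ⊗ₜ y) ⊗ₜ z))) : F = G := by
  refine hom_ext_mulPow fun w z => ?_
  obtain ⟨w, rfl⟩ := (mulPow k V a b).surjective w
  induction w using TensorProduct.induction_on with
  | zero => simp
  | tmul x y => exact h x y z
  | add w w' hw hw' => simp only [map_add, TensorProduct.add_tmul, hw, hw']

theorem conv_tmap_assoc {a b c a' b' c' : ℕ} (f : (⨂[k]^a V) →ₗ[k] ⨂[k]^a' V)
    (g : (⨂[k]^b V) →ₗ[k] ⨂[k]^b' V) (h : (⨂[k]^c V) →ₗ[k] ⨂[k]^c' V) :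
    conv (add_assoc a b c) (add_assoc a' b' c') (tmap (tmap f g) h) = tmap f (tmap g h) := by
  refine (LinearMap.cancel_right (TensorPower.cast k V (add_assoc a b c)).surjective).mp
    (hom_ext_mulPow_mulPow fun x y z => ?_)
  have h_source := TensorPower.mul_assoc x y z
  have h_target := TensorPower.mul_assoc (f x) (g y) (h z)
  simp only [TensorPower.gMul_def] at h_source h_target
  simp only [LinearMap.comp_apply, LinearEquiv.coe_coe, conv_apply_cast]
  rw [h_source]
  simp only [tmap_mulPow_tmul, h_target]

theorem conv_id_tmap {a b : ℕ} (f : (⨂[k]^a V) →ₗ[k] ⨂[k]^b V) :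
    conv (zero_add a) (zero_add b) (tmap (LinearMap.id : (⨂[k]^0 V) →ₗ[k] _) f) = f := by
  refine LinearMap.ext fun x => ?_
  have h_source := TensorPower.one_mul x
  have h_target := TensorPower.one_mul (f x)
  rw [TensorPower.gMul_def] at h_source h_target
  conv_lhs => rw [← h_source]
  rw [conv_apply_cast, tmap_mulPow_tmul, LinearMap.id_apply, h_target]

theorem conv_tmap_id {a b : ℕ} (f : (⨂[k]^a V) →ₗ[k] ⨂[k]^b V) :
    conv (add_zero a) (add_zero b) (tmap f (LinearMap.id : (⨂[k]^0 V) →ₗ[k] _)) = f := by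
  refine LinearMap.ext fun x => ?_
  have h_source := TensorPower.mul_one x
  have h_target := TensorPower.mul_one (f x)
  rw [TensorPower.gMul_def] at h_source h_target
  conv_lhs => rw [← h_source]
  rw [conv_apply_cast, tmap_mulPow_tmul, LinearMap.id_apply, h_target]

theorem tmap_zero {a b c d : ℕ} (f : (⨂[k]^a V) →ₗ[k] ⨂[k]^c V) :
    tmap f (0 : (⨂[k]^b V) →ₗ[k] ⨂[k]^d V) = 0 := by
  simp only [tmap, TensorProduct.map_zero_right, LinearMap.zero_comp, LinearMap.comp_zero]

theorem zero_tmap {a b c d : ℕ} (g : (⨂[k]^b V) →ₗ[k] ⨂[k]^d V) :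
    tmap (0 : (⨂[k]^a V) →ₗ[k] ⨂[k]^c V) g = 0 := by
  simp only [tmap, TensorProduct.map_zero_left, LinearMap.zero_comp, LinearMap.comp_zero]

theorem tmap_add {a b c d : ℕ} (f : (⨂[k]^a V) →ₗ[k] ⨂[k]^c V)
    (g g' : (⨂[k]^b V) →ₗ[k] ⨂[k]^d V) : tmap f (g + g') = tmap f g + tmap f g' := by
  simp only [tmap, TensorProduct.map_add_right, LinearMap.add_comp, LinearMap.comp_add]

theorem add_tmap {a b c d : ℕ} (f f' : (⨂[k]^a V) →ₗ[k] ⨂[k]^c V)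
    (g : (⨂[k]^b V) →ₗ[k] ⨂[k]^d V) : tmap (f + f') g = tmap f g + tmap f' g := by
  simp only [tmap, TensorProduct.map_add_left, LinearMap.add_comp, LinearMap.comp_add]

theorem pmap_zero (f : V →ₗ[k] V) : pmap f 0 = LinearMap.id := by
  refine PiTensorProduct.ext (MultilinearMap.ext fun v => ?_)
  simp [pmap, Subsingleton.elim (fun i => f (v i)) v]

theorem tmap_pmap_pmap (f : V →ₗ[k] V) (a b : ℕ) :
    tmap (pmap f a) (pmap f b) = pmap f (a + b) := by
  refine (LinearMap.cancel_right (mulPow k V a b).surjective).mp ?_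
  refine TensorProduct.ext (PiTensorProduct.ext (MultilinearMap.ext fun v =>
    PiTensorProduct.ext (MultilinearMap.ext fun w => ?_)))
  change tmap (pmap f a) (pmap f b) (mulPow k V a b (tprod k v ⊗ₜ tprod k w))
    = pmap f (a + b) (mulPow k V a b (tprod k v ⊗ₜ tprod k w))
  have h_append {m n : ℕ} (v : Fin m → V) (w : Fin n → V) :
      mulPow k V m n (tprod k v ⊗ₜ tprod k w) = tprod k (Fin.append v w) :=
    TensorPower.tprod_mul_tprod k v w
  rw [tmap_mulPow_tmul, h_append]
  simp only [pmap, PiTensorProduct.map_tprod, h_append]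
  congr 1
  funext i
  refine Fin.addCases (fun i => ?_) (fun i => ?_) i <;> simp

section GradedRing

open DirectSum

variable (k V) in
/-- The linear maps between tensor powers of `V`, as a family graded by the pair of exponents of
source and target, so that `⊗` adds degrees. It is not reducible, so that instance search finds its
additive structure only through the instance below. -/
def TensorPowerHom (p : ℕ × ℕ) : Type _ := (⨂[k]^p.1 V) →ₗ[k] ⨂[k]^p.2 V

noncomputable instance (p : ℕ × ℕ) : AddCommGroup (TensorPowerHom k V p) :=
  inferInstanceAs (AddCommGroup ((⨂[k]^p.1 V) →ₗ[k] ⨂[k]^p.2 V))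

theorem gradedMonoid_mk_conv {a b a' b' : ℕ} (h1 : a = a') (h2 : b = b')
    (f : (⨂[k]^a V) →ₗ[k] ⨂[k]^b V) :
    GradedMonoid.mk (A := TensorPowerHom k V) (a', b') (conv h1 h2 f)
      = GradedMonoid.mk (A := TensorPowerHom k V) (a, b) f := by
  subst h1 h2
  rw [conv_rfl]

noncomputable instance : GradedMonoid.GOne (TensorPowerHom k V) where
  one := LinearMap.id

noncomputable instance : GradedMonoid.GMul (TensorPowerHom k V) where
  mul f g := tmap f g

noncomputable instance : GradedMonoid.GMonoid (TensorPowerHom k V) where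
  one_mul f := (gradedMonoid_mk_conv _ _ _).symm.trans
    (congrArg (GradedMonoid.mk f.1) (conv_id_tmap f.2))
  mul_one f := (gradedMonoid_mk_conv _ _ _).symm.trans
    (congrArg (GradedMonoid.mk f.1) (conv_tmap_id f.2))
  mul_assoc f g h := (gradedMonoid_mk_conv _ _ _).symm.trans
    (congrArg (GradedMonoid.mk (f.1 + (g.1 + h.1))) (conv_tmap_assoc f.2 g.2 h.2))

noncomputable instance : GRing (TensorPowerHom k V) where
  mul_zero f := tmap_zero f
  zero_mul g := zero_tmap g
  mul_add f g g' := tmap_add f g g'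
  add_mul f f' g := add_tmap f f' g
  natCast n := (n : Module.End k (⨂[k]^0 V))
  natCast_zero := Nat.cast_zero (R := Module.End k (⨂[k]^0 V))
  natCast_succ n := Nat.cast_succ (R := Module.End k (⨂[k]^0 V)) n
  intCast n := (n : Module.End k (⨂[k]^0 V))
  intCast_ofNat n := Int.cast_natCast (R := Module.End k (⨂[k]^0 V)) n
  intCast_negSucc_ofNat n := Int.cast_negSucc (R := Module.End k (⨂[k]^0 V)) n

/-- The inclusion of `Hom (V^{⊗a}, V^{⊗b})` into the graded ring of all such spaces; there, the
identifications `conv` become equalities. -/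
noncomputable def homogeneous (a b : ℕ) :
    ((⨂[k]^a V) →ₗ[k] ⨂[k]^b V) →+ ⨁ p, TensorPowerHom k V p :=
  of (TensorPowerHom k V) (a, b)

theorem homogeneous_injective (a b : ℕ) :
    Function.Injective (homogeneous (k := k) (V := V) a b) :=
  of_injective (β := TensorPowerHom k V) (a, b)

theorem homogeneous_conv {a b a' b' : ℕ} (h1 : a = a') (h2 : b = b')
    (f : (⨂[k]^a V) →ₗ[k] ⨂[k]^b V) :
    homogeneous a' b' (conv h1 h2 f) = homogeneous a b f :=
  of_eq_of_gradedMonoid_eq (gradedMonoid_mk_conv h1 h2 f)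

theorem homogeneous_tmap {a b c d : ℕ} (f : (⨂[k]^a V) →ₗ[k] ⨂[k]^c V)
    (g : (⨂[k]^b V) →ₗ[k] ⨂[k]^d V) :
    homogeneous (a + b) (c + d) (tmap f g) = homogeneous a c f * homogeneous b d g :=
  (of_mul_of (A := TensorPowerHom k V) (i := (a, c)) (j := (b, d)) f g).symm

theorem homogeneous_pmap (f : V →ₗ[k] V) (n : ℕ) :
    homogeneous n n (pmap f n) = homogeneous 1 1 (pmap f 1) ^ n := by
  induction n with
  | zero => rw [pmap_zero, pow_zero]; rfl
  | succ n ih => rw [← tmap_pmap_pmap, homogeneous_tmap, ih, pow_succ]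

theorem homogeneous_neg_one_pow_smul {a b : ℕ} (n : ℕ) (f : (⨂[k]^a V) →ₗ[k] ⨂[k]^b V) :
    homogeneous a b ((-1 : k) ^ n • f) = (-1) ^ n * homogeneous a b f := by
  rcases n.even_or_odd with hn | hn
  · rw [hn.neg_one_pow, hn.neg_one_pow, one_smul, one_mul]
  · have h_neg : (-1 : k) • f = -f := neg_one_smul k f
    rw [hn.neg_one_pow, hn.neg_one_pow, h_neg, map_neg, neg_one_mul]

end GradedRing

theorem prop_2_4_a_general (σ τ : V →ₗ[k] V)
    (δr δl : (i : ℕ) → (⨂[k]^i V) →ₗ[k] ⨂[k]^(i + 1) V)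
    (h_one : δr 1 = δl 1)
    (h_rec : ∀ (i : ℕ) (_ : 2 ≤ i),
      δr i + (-1 : k) ^ i • δl i
        = conv (by omega) (by omega) (tmap (pmap σ 1) (δr (i - 1)))
          + (-1 : k) ^ i • conv (by omega) (by omega) (tmap (δl (i - 1)) (pmap τ 1)))
    (d : ℕ) :
    ∑ i : Fin d, (-1 : k) ^ ((i : ℕ) + 1) •
        conv (a' := d) (b' := d + 1) (by omega) (by omega)
          (tmap (δr ((i : ℕ) + 1)) (pmap τ (d - ((i : ℕ) + 1))))
      = (-1 : k) ^ (d + 1) •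
        ∑ i : Fin d, (-1 : k) ^ ((i : ℕ) + 1) •
          conv (a' := d) (b' := d + 1) (by omega) (by omega)
            (tmap (pmap σ (d - ((i : ℕ) + 1))) (δl ((i : ℕ) + 1))) := by
  have h_succ (n : ℕ) := congrArg (homogeneous (n + 2) (n + 2 + 1)) (h_rec (n + 2) (by omega))
  simp only [map_add, homogeneous_neg_one_pow_smul, homogeneous_conv, homogeneous_tmap] at h_succ
  have key := alternating_sum_mul_pow_eq_alternating_sum_pow_mul
    (r := fun i => homogeneous (i + 1) (i + 1 + 1) (δr (i + 1)))
    (l := fun i => homogeneous (i + 1) (i + 1 + 1) (δl (i + 1)))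
    (s := homogeneous 1 1 (pmap σ 1)) (t := homogeneous 1 1 (pmap τ 1))
    (by simp only [h_one]) (fun n => by simpa [pow_add] using h_succ n) d
  apply homogeneous_injective
  simpa only [map_sum, homogeneous_neg_one_pow_smul, homogeneous_conv, homogeneous_tmap,
    homogeneous_pmap _ (d - _), Finset.sum_range] using key

/-- **Proposition 2.4(a)**: if `(δ_{i,r}, δ_{i,l})` satisfies the sequence-pair recurrence for
`σ`, then for every `d ≥ 1`,
`∑_{i=1}^{d} (−1)^i (δ_{i,r} ⊗ id_V^{⊗(d−i)}) = (−1)^{d+1} ∑_{i=1}^{d} (−1)^i (σ^{⊗(d−i)} ⊗ δ_{i,l})`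
as linear maps `V^{⊗d} → V^{⊗(d+1)}`. -/
theorem prop_2_4_a (σ : V ≃ₗ[k] V)
    (δr δl : (i : ℕ) → (⨂[k]^i V) →ₗ[k] ⨂[k]^(i+1) V)
    (hpair : SeqPairRec σ δr δl)
    (d : ℕ) (hd : 1 ≤ d) :
    (∑ i : Fin d, ((-1 : k)^((i : ℕ)+1)) •
        conv (a' := d) (b' := d+1) (by have := i.isLt; omega) (by have := i.isLt; omega)
          (tmap (δr ((i : ℕ)+1)) (pmap (LinearMap.id) (d - ((i : ℕ)+1)))))
    = ((-1 : k)^(d+1)) •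
      ∑ i : Fin d, ((-1 : k)^((i : ℕ)+1)) •
        conv (a' := d) (b' := d+1) (by have := i.isLt; omega) (by have := i.isLt; omega)
          (tmap (pmap σ.toLinearMap (d - ((i : ℕ)+1))) (δl ((i : ℕ)+1))) := by
  exact prop_2_4_a_general σ.toLinearMap LinearMap.id δr δl hpair.1 hpair.2 d

end OrePaper
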